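/- Fix K > 0. For all c, λ ∈ ℝ, the exponential moment of the discrete Gaussian satisfies ∑_{n∈ℤ} exp(cKn) · ρ_K[λ](n) = exp(cKλ + c²K/4) · Z_K(λ + c/2)/Z_K(λ). In particular, since Z_K is 1-periodic, if c is an even integer then ∑_{n∈ℤ} exp(cKn) · ρ_K[λ](n) = exp(cKλ + c²K/4). -/

import Mathlib

/-!
Completing the square, `c K n - K (n - lam)² = c K lam + c² K / 4 - K (n - (lam + c / 2))²`, so the
tilted sum is termwise a constant multiple of the series for `Zfun K (lam + c / 2)`.
When `c = 2 * j`, the shift `lam + c / 2` is by the integer `j`; since `Zfun K` is periodic under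
integer shifts (`Zfun_add_int`) and positive (`Zfun_pos`), the quotient of the two normalizations
is `1`.
-/

/-- Normalization constant `Z_K(λ) = ∑_{m∈ℤ} exp(−K(m−λ)²)`. -/
noncomputable def Zfun (K lam : ℝ) : ℝ :=
  ∑' m : ℤ, Real.exp (-K * ((m : ℝ) - lam) ^ 2)

/-- Discrete Gaussian pmf `ρ_K[λ](n) = exp(−K(n−λ)²)/Z_K(λ)`. -/
noncomputable def rho (K lam : ℝ) (n : ℤ) : ℝ :=
  Real.exp (-K * ((n : ℝ) - lam) ^ 2) / Zfun K lam

theorem summable_Zfun {K : ℝ} (hK : 0 < K) (lam : ℝ) :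
    Summable fun m : ℤ => Real.exp (-K * ((m : ℝ) - lam) ^ 2) := by
  have hsum := HurwitzKernelBounds.summable_f_int 0 (-lam) (div_pos hK Real.pi_pos)
  refine hsum.congr fun m => ?_
  have hpi := Real.pi_ne_zero
  simp only [HurwitzKernelBounds.f_int, pow_zero, one_mul]
  congr 1
  field_simp
  ring

/-- Positivity rests on summability: a divergent `tsum` would be `0`. -/
theorem Zfun_pos {K : ℝ} (hK : 0 < K) (lam : ℝ) : 0 < Zfun K lam :=
  (summable_Zfun hK lam).tsum_pos (fun _ => (Real.exp_pos _).le) 0 (Real.exp_pos _)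

theorem Zfun_add_int (K lam : ℝ) (j : ℤ) : Zfun K (lam + j) = Zfun K lam := by
  unfold Zfun
  rw [← (Equiv.addRight j).tsum_eq]
  refine tsum_congr fun m => ?_
  simp only [Equiv.coe_addRight, Int.cast_add]
  congr 2
  ring

theorem tsum_exp_mul_rho (K c lam : ℝ) :
    ∑' n : ℤ, Real.exp (c * K * (n : ℝ)) * rho K lam n =
      Real.exp (c * K * lam + c ^ 2 * K / 4) * Zfun K (lam + c / 2) / Zfun K lam := by
  rw [Zfun.eq_1 K (lam + c / 2), ← tsum_mul_left, ← tsum_div_const]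
  refine tsum_congr fun n => ?_
  rw [rho, ← mul_div_assoc, ← Real.exp_add, ← Real.exp_add]
  congr 2
  ring

theorem stmt9 (K : ℝ) (hK : 0 < K) (c lam : ℝ) :
    (∑' n : ℤ, Real.exp (c * K * (n : ℝ)) * rho K lam n =
      Real.exp (c * K * lam + c ^ 2 * K / 4) * Zfun K (lam + c / 2) / Zfun K lam) ∧
    (∀ j : ℤ, c = 2 * (j : ℝ) →
      ∑' n : ℤ, Real.exp (c * K * (n : ℝ)) * rho K lam n =
        Real.exp (c * K * lam + c ^ 2 * K / 4)) := by
  refine ⟨tsum_exp_mul_rho K c lam, fun j hj => ?_⟩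
  have hshift : lam + c / 2 = lam + j := by rw [hj]; ring
  rw [tsum_exp_mul_rho, hshift, Zfun_add_int, mul_div_cancel_right₀ _ (Zfun_pos hK lam).ne']
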